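/- arXiv:1905.13739 — 2 statements merged into one kernel-verified Lean document; each statement's English description precedes it below -/
import Mathlib

section
/- Let d ≥ 5 and let λ ∈ ℂ with Re λ > (d−3)/2. If there exists a nonzero complex-valued function f, smooth on [0,1], solving the mode ODE (1−ρ²)f''(ρ) + ((d−1)/ρ − 2(λ+2)ρ)f'(ρ) − ((λ+1)(λ+2) − 24(d−1)(d−4)/(d−4+3ρ²)²)f(ρ) = 0 on (0,1), then λ is real. -/
/-! Multiplied by `w(ρ) = ρ^(d-1) * (1-ρ²)^κ`, where `κ = Re λ - (d-3)/2`, the mode equation becomes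
`((1-ρ²) w f')' = w (2 i Im λ ρ f' + c f)` with `Im c = Im λ * (2 Re λ + 3)`, whatever the real
potential. Pairing with `conj f` and taking imaginary parts, the first-order term contributes
`Im λ * w ρ (|f|²)'`, and moving it into the flux leaves
`[w ((1-ρ²) Im (conj f * f') - Im λ * ρ |f|²)]' = 2 κ Im λ * w |f|² / (1-ρ²)`.
As `d > 1` and `κ > 0`, the flux vanishes at both endpoints; its derivative has a constant
sign, so that derivative vanishes, and `f = 0` unless `Im λ = 0`. -/

open Set
open scoped ComplexConjugate

section RealAnalysis

variable {a b x : ℝ}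

lemma eq_zero_of_hasDerivAt_nonneg_of_le {F F' : ℝ → ℝ} (hF : ContinuousOn F (Icc a b))
    (hF' : ∀ t ∈ Ioo a b, HasDerivAt F (F' t) t) (hnonneg : ∀ t ∈ Ioo a b, 0 ≤ F' t)
    (hle : F b ≤ F a) (hx : x ∈ Ioo a b) : F' x = 0 := by
  have hab : a ≤ b := (hx.1.trans hx.2).le
  have hmono : MonotoneOn F (Icc a b) :=
    monotoneOn_of_hasDerivWithinAt_nonneg (convex_Icc a b) hF
      (fun t ht ↦ (hF' t (interior_Icc.subset ht)).hasDerivWithinAt)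
      (fun t ht ↦ hnonneg t (interior_Icc.subset ht))
  have hconst : ∀ t ∈ Icc a b, F t = F a := fun t ht ↦
    le_antisymm ((hmono ht (right_mem_Icc.2 hab) ht.2).trans hle)
      (hmono (left_mem_Icc.2 hab) ht ht.1)
  have hev : F =ᶠ[nhds x] fun _ ↦ F a :=
    Filter.eventually_of_mem (Icc_mem_nhds hx.1 hx.2) hconst
  exact (hF' x hx).unique ((hasDerivAt_const x (F a)).congr_of_eventuallyEq hev)

lemma hasDerivAt_im_conj_mul {f g : ℝ → ℂ} {f' g' : ℂ} (hf : HasDerivAt f f' x)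
    (hg : HasDerivAt g g' x) :
    HasDerivAt (fun t ↦ (conj (f t) * g t).im) (conj f' * g x + conj (f x) * g').im x :=
  Complex.imCLM.hasFDerivAt.comp_hasDerivAt x (hf.star.mul hg)

lemma hasDerivAt_one_sub_sq (x : ℝ) : HasDerivAt (fun t : ℝ ↦ 1 - t ^ 2) (-(2 * x)) x := by
  simpa using (hasDerivAt_pow 2 x).const_sub 1

lemma one_sub_sq_pos (hx : x ∈ Ioo (0 : ℝ) 1) : 0 < 1 - x ^ 2 :=
  sub_pos.2 (pow_lt_one₀ hx.1.le hx.2 two_ne_zero)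

end RealAnalysis

section Weight

variable {d κ ρ : ℝ}

/-- The weight `ρ^(d-1) * (1-ρ²)^κ`, by which the real part of the first-order coefficient of the
mode equation is absorbed into a divergence when `κ = Re λ - (d-3)/2`. -/
noncomputable def modeWeight (d κ ρ : ℝ) : ℝ := ρ ^ (d - 1) * (1 - ρ ^ 2) ^ κ

lemma modeWeight_pos (hρ : ρ ∈ Ioo (0 : ℝ) 1) : 0 < modeWeight d κ ρ :=
  mul_pos (Real.rpow_pos_of_pos hρ.1 _) (Real.rpow_pos_of_pos (one_sub_sq_pos hρ) _)

lemma modeWeight_zero (hd : d ≠ 1) : modeWeight d κ 0 = 0 := by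
  simp [modeWeight, Real.zero_rpow (sub_ne_zero.2 hd)]

lemma modeWeight_one (hκ : κ ≠ 0) : modeWeight d κ 1 = 0 := by
  simp [modeWeight, Real.zero_rpow hκ]

lemma continuous_modeWeight (hd : 1 ≤ d) (hκ : 0 ≤ κ) : Continuous (modeWeight d κ) :=
  (continuous_id.rpow_const fun _ ↦ Or.inr (sub_nonneg.2 hd)).mul
    ((continuous_const.sub (continuous_pow 2)).rpow_const fun _ ↦ Or.inr hκ)

lemma hasDerivAt_modeWeight (hρ : ρ ∈ Ioo (0 : ℝ) 1) :
    HasDerivAt (modeWeight d κ)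
      (modeWeight d κ ρ * ((d - 1) / ρ - 2 * κ * ρ / (1 - ρ ^ 2))) ρ := by
  have hs := (one_sub_sq_pos hρ).ne'
  have hleft : HasDerivAt (fun t : ℝ ↦ t ^ (d - 1)) ((d - 1) * ρ ^ (d - 1 - 1)) ρ :=
    Real.hasDerivAt_rpow_const (Or.inl hρ.1.ne')
  have hright : HasDerivAt (fun t : ℝ ↦ (1 - t ^ 2) ^ κ)
      (-(2 * ρ) * κ * (1 - ρ ^ 2) ^ (κ - 1)) ρ :=
    (hasDerivAt_one_sub_sq ρ).rpow_const (Or.inl hs)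
  refine (hleft.mul hright).congr_deriv ?_
  rw [Real.rpow_sub_one hρ.1.ne', Real.rpow_sub_one hs, modeWeight]
  ring

end Weight

section Flux

variable {d v ρ : ℝ} {lam : ℂ} {f f' : ℝ → ℂ}

/-- The mode equation at the radius `ρ`, in dimension `d` and with potential value `v`, for a
function whose value and first two derivatives at `ρ` are `z`, `z'` and `z''`. -/
def ModeEquation (d v : ℝ) (lam : ℂ) (ρ : ℝ) (z z' z'' : ℂ) : Prop :=
  (1 - (ρ : ℂ) ^ 2) * z'' + (((d : ℂ) - 1) / (ρ : ℂ) - 2 * (lam + 2) * (ρ : ℂ)) * z'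
    - ((lam + 1) * (lam + 2) - (v : ℂ)) * z = 0

lemma ModeEquation.im_conj_mul {z z' z'' : ℂ} (h : ModeEquation d v lam ρ z z' z'') :
    (1 - ρ ^ 2) * (conj z * z'').im =
      -((d - 1) / ρ - 2 * (lam.re + 2) * ρ) * (conj z * z').im
        + 2 * lam.im * ρ * (conj z * z').re + lam.im * (2 * lam.re + 3) * ‖z‖ ^ 2 := by
  have hcoeff : ((d : ℂ) - 1) / ρ = ((d - 1) / ρ : ℝ) := by push_cast; rfl
  have hlead : 1 - (ρ : ℂ) ^ 2 = (1 - ρ ^ 2 : ℝ) := by push_cast; rfl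
  have him := congrArg Complex.im (congrArg (conj z * ·) h)
  rw [hcoeff, hlead] at him
  simp only [Complex.mul_im, Complex.mul_re, Complex.add_im, Complex.add_re, Complex.sub_im,
    Complex.sub_re, Complex.ofReal_im, Complex.ofReal_re, Complex.conj_im, Complex.conj_re,
    Complex.one_im, Complex.one_re, Complex.re_ofNat, Complex.im_ofNat, Complex.zero_im,
    Complex.zero_re] at him ⊢
  rw [Complex.sq_norm, Complex.normSq_apply]
  linear_combination him

/-- The Wronskian-type current `(1-ρ²) Im (conj f * f') - Im λ * ρ |f|²`; `f'` stands for the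
derivative of `f` and is a separate argument so that it may be continuous up to the endpoints. -/
noncomputable def modeCurrent (lam : ℂ) (f f' : ℝ → ℂ) (ρ : ℝ) : ℝ :=
  (1 - ρ ^ 2) * (conj (f ρ) * f' ρ).im - lam.im * (ρ * ‖f ρ‖ ^ 2)

lemma hasDerivAt_modeCurrent {z'' : ℂ} (hf : HasDerivAt f (f' ρ) ρ) (hf' : HasDerivAt f' z'' ρ)
    (h : ModeEquation d v lam ρ (f ρ) (f' ρ) z'') :
    HasDerivAt (modeCurrent lam f f')
      (lam.im * (2 * lam.re + 2) * ‖f ρ‖ ^ 2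
        - ((d - 1) / ρ - (2 * lam.re + 2) * ρ) * (conj (f ρ) * f' ρ).im) ρ := by
  have hwronskian : HasDerivAt (fun t ↦ (conj (f t) * f' t).im) (conj (f ρ) * z'').im ρ := by
    refine (hasDerivAt_im_conj_mul hf hf').congr_deriv ?_
    rw [← Complex.normSq_eq_conj_mul_self, Complex.add_im, Complex.ofReal_im, zero_add]
  have hnorm : HasDerivAt (fun t ↦ ‖f t‖ ^ 2) (2 * (conj (f ρ) * f' ρ).re) ρ := by
    simpa only [Complex.inner, mul_comm] using hf.norm_sq
  refine (((hasDerivAt_one_sub_sq ρ).mul hwronskian).sub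
    (((hasDerivAt_id ρ).mul hnorm).const_mul lam.im)).congr_deriv ?_
  simp only [id_eq]
  linear_combination h.im_conj_mul

lemma continuousOn_modeCurrent {s : Set ℝ} (hf : ContinuousOn f s) (hf' : ContinuousOn f' s) :
    ContinuousOn (modeCurrent lam f f') s := by
  unfold modeCurrent
  fun_prop

/-- The flux whose derivative is a multiple of `|f|²` of constant sign: the current weighted by
`modeWeight` at the exponent `κ = Re λ - (d-3)/2`. -/
noncomputable def modeFlux (d : ℝ) (lam : ℂ) (f f' : ℝ → ℂ) (ρ : ℝ) : ℝ :=
  modeWeight d (lam.re - (d - 3) / 2) ρ * modeCurrent lam f f' ρ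

lemma hasDerivAt_modeFlux {z'' : ℂ} (hρ : ρ ∈ Ioo (0 : ℝ) 1) (hf : HasDerivAt f (f' ρ) ρ)
    (hf' : HasDerivAt f' z'' ρ) (h : ModeEquation d v lam ρ (f ρ) (f' ρ) z'') :
    HasDerivAt (modeFlux d lam f f')
      (2 * (lam.re - (d - 3) / 2) * lam.im
        * (modeWeight d (lam.re - (d - 3) / 2) ρ / (1 - ρ ^ 2)) * ‖f ρ‖ ^ 2) ρ := by
  have hρ₀ := hρ.1.ne'
  have hs := (one_sub_sq_pos hρ).ne'
  refine ((hasDerivAt_modeWeight hρ).mul (hasDerivAt_modeCurrent hf hf' h)).congr_deriv ?_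
  rw [modeCurrent]
  field_simp
  ring

end Flux

theorem eqOn_zero_of_modeEquation {d : ℝ} (hd : 1 < d) {lam : ℂ} (hlam : (d - 3) / 2 < lam.re)
    (him : lam.im ≠ 0) {V : ℝ → ℝ} {f f' f'' : ℝ → ℂ} (hf : ContinuousOn f (Icc 0 1))
    (hf' : ContinuousOn f' (Icc 0 1)) (hderiv : ∀ ρ ∈ Ioo (0 : ℝ) 1, HasDerivAt f (f' ρ) ρ)
    (hderiv' : ∀ ρ ∈ Ioo (0 : ℝ) 1, HasDerivAt f' (f'' ρ) ρ)
    (hode : ∀ ρ ∈ Ioo (0 : ℝ) 1, ModeEquation d (V ρ) lam ρ (f ρ) (f' ρ) (f'' ρ)) :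
    EqOn f 0 (Icc 0 1) := by
  have hκ : 0 < lam.re - (d - 3) / 2 := sub_pos.2 hlam
  have hcont : ContinuousOn (modeFlux d lam f f') (Icc 0 1) :=
    (continuous_modeWeight hd.le hκ.le).continuousOn.mul (continuousOn_modeCurrent hf hf')
  have hflux₀ : modeFlux d lam f f' 0 = 0 := by rw [modeFlux, modeWeight_zero hd.ne', zero_mul]
  have hflux₁ : modeFlux d lam f f' 1 = 0 := by rw [modeFlux, modeWeight_one hκ.ne', zero_mul]
  have hfactor : ∀ ρ ∈ Ioo (0 : ℝ) 1, 0 < modeWeight d (lam.re - (d - 3) / 2) ρ / (1 - ρ ^ 2) :=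
    fun ρ hρ ↦ div_pos (modeWeight_pos hρ) (one_sub_sq_pos hρ)
  have hflux : ∀ ρ ∈ Ioo (0 : ℝ) 1, HasDerivAt (fun t ↦ lam.im * modeFlux d lam f f' t)
      (2 * (lam.re - (d - 3) / 2) * lam.im ^ 2
        * (modeWeight d (lam.re - (d - 3) / 2) ρ / (1 - ρ ^ 2)) * ‖f ρ‖ ^ 2) ρ := fun ρ hρ ↦
    ((hasDerivAt_modeFlux hρ (hderiv ρ hρ) (hderiv' ρ hρ) (hode ρ hρ)).const_mul
      lam.im).congr_deriv (by ring)
  have hinterior : EqOn f 0 (Ioo 0 1) := by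
    intro ρ hρ
    have hzero := eq_zero_of_hasDerivAt_nonneg_of_le (hcont.const_mul lam.im) hflux
      (fun t ht ↦ by have := hfactor t ht; positivity) (by rw [hflux₀, hflux₁]) hρ
    simpa [him, hκ.ne', (hfactor ρ hρ).ne'] using hzero
  exact hinterior.of_subset_closure hf continuousOn_const Ioo_subset_Icc_self
    (closure_Ioo zero_ne_one).superset

theorem eigenvalues_real_above_cutoff_general {d : ℝ} (hd : 1 < d) {lam : ℂ}
    (hlam : (d - 3) / 2 < lam.re) {V : ℝ → ℝ} {f : ℝ → ℂ} (hf : ContDiffOn ℝ 1 f (Icc 0 1))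
    (hf' : DifferentiableOn ℝ (deriv f) (Ioo 0 1)) (hne : ∃ ρ ∈ Icc (0 : ℝ) 1, f ρ ≠ 0)
    (hode : ∀ ρ ∈ Ioo (0 : ℝ) 1,
      ModeEquation d (V ρ) lam ρ (f ρ) (deriv f ρ) (iteratedDeriv 2 f ρ)) :
    lam.im = 0 := by
  obtain ⟨ρ₀, hρ₀, hfρ₀⟩ := hne
  by_contra him
  have hnhds : ∀ ρ ∈ Ioo (0 : ℝ) 1, Icc (0 : ℝ) 1 ∈ nhds ρ := fun ρ hρ ↦ Icc_mem_nhds hρ.1 hρ.2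
  have heq : EqOn (derivWithin f (Icc 0 1)) (deriv f) (Ioo 0 1) := fun ρ hρ ↦
    derivWithin_of_mem_nhds (hnhds ρ hρ)
  refine hfρ₀ (eqOn_zero_of_modeEquation hd hlam him (V := V) (f'' := iteratedDeriv 2 f)
    hf.continuousOn (hf.continuousOn_derivWithin (uniqueDiffOn_Icc zero_lt_one) le_rfl)
    (fun ρ hρ ↦ ?_) (fun ρ hρ ↦ ?_) (fun ρ hρ ↦ ?_) hρ₀)
  · rw [heq hρ]
    exact ((hf.differentiableOn one_ne_zero).differentiableAt (hnhds ρ hρ)).hasDerivAt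
  · rw [iteratedDeriv_succ, iteratedDeriv_one]
    exact (hf'.differentiableAt (Ioo_mem_nhds hρ.1 hρ.2)).hasDerivAt.congr_of_eventuallyEq
      (heq.eventuallyEq_of_mem (Ioo_mem_nhds hρ.1 hρ.2))
  · rw [heq hρ]
    exact hode ρ hρ

/-- For `d ≥ 5` and `λ ∈ ℂ` with `Re λ > (d−3)/2`: if the mode ODE admits a nonzero
solution smooth on `[0,1]`, then `λ` is real. -/
theorem eigenvalues_real_above_cutoff (d : ℕ) (hd : 5 ≤ d) (lam : ℂ)
    (hlam : ((d : ℝ) - 3) / 2 < lam.re)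
    (hex : ∃ f : ℝ → ℂ,
      ContDiffOn ℝ (⊤ : ℕ∞) f (Set.Icc 0 1) ∧
      (∃ ρ ∈ Set.Icc (0 : ℝ) 1, f ρ ≠ 0) ∧
      (∀ ρ ∈ Set.Ioo (0 : ℝ) 1,
        (1 - (ρ : ℂ) ^ 2) * iteratedDeriv 2 f ρ
          + (((d : ℂ) - 1) / (ρ : ℂ) - 2 * (lam + 2) * (ρ : ℂ)) * deriv f ρ
          - ((lam + 1) * (lam + 2)
              - 24 * ((d : ℂ) - 1) * ((d : ℂ) - 4) /
                  ((d : ℂ) - 4 + 3 * (ρ : ℂ) ^ 2) ^ 2) * f ρ = 0)) :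
    lam.im = 0 := by
  obtain ⟨f, hf, hne, hode⟩ := hex
  have hf' : DifferentiableOn ℝ (deriv f) (Ioo 0 1) :=
    ((hf.mono Ioo_subset_Icc_self).deriv_of_isOpen (m := (⊤ : ℕ∞)) isOpen_Ioo
      le_rfl).differentiableOn (by simp)
  exact eigenvalues_real_above_cutoff_general (d := d) (by norm_cast; lia) hlam
    (V := fun ρ ↦ 24 * ((d : ℝ) - 1) * (d - 4) / (d - 4 + 3 * ρ ^ 2) ^ 2)
    (hf.of_le (mod_cast le_top)) hf' hne
    fun ρ hρ ↦ by simpa [ModeEquation] using hode ρ hρ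
end

section
/- Let d ≥ 5, T > 0, and set Ω = {(t,r) : t < T, 0 < r < T−t}. If φ is a smooth solution on Ω of the linearized equation ∂_t²φ − ∂_r²φ − ((d−1)/r)∂_rφ − 3(T−t)^{-2}U*(r/(T−t))²φ = 0, then the function φ̃ defined on Ω by φ̃(t,r) = ((T−t)²−r²)^{−(d−1)/2} φ(T + (t−T)/((T−t)²−r²), r/((T−t)²−r²)) is well defined (the transformation maps Ω into Ω) and also solves the same linearized equation on Ω. -/
open Filter Function Set Topology

/-!
With `k = (n - 1) / 2`, conjugation by `r ^ k` turns the radial wave operator into the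
one-dimensional one plus a multiple of `r⁻²`, and turns the weighted transform `φ ↦ φ̃` into plain
composition with the inversion, because `r ^ k * Q ^ (-k) = (r / Q) ^ k` for `Q = (T - t)² - r²`.
In the null coordinates `t - r` and `t + r` the inversion acts on each variable separately (and
swaps the two), so it is conformal: the one-dimensional wave operator picks up the factor `Q⁻²`.
The potentials `r⁻²` and `(T - t)⁻² V(r / (T - t))` scale by that same factor, since `r / (T - t)`
is invariant under the inversion.
-/

variable {E F : Type*} [NormedAddCommGroup E] [NormedSpace ℝ E]
  [NormedAddCommGroup F] [NormedSpace ℝ F]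

/-- The one-dimensional wave operator `∂_t² − ∂_r²`. -/
noncomputable def waveOperator (φ : ℝ → ℝ → E) (t r : ℝ) : E :=
  iteratedDeriv 2 (fun s => φ s r) t - iteratedDeriv 2 (φ t) r

/-- The wave operator `∂_t² − ∂_r² − ((n − 1) / r) ∂_r` on radial functions in `n` space dimensions,
for a real parameter `n`. -/
noncomputable def radialWaveOperator (n : ℝ) (φ : ℝ → ℝ → E) (t r : ℝ) : E :=
  waveOperator φ t r - ((n - 1) / r) • deriv (φ t) r

theorem waveOperator_congr {φ ψ : ℝ → ℝ → E} {t r : ℝ}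
    (h : uncurry φ =ᶠ[𝓝 (t, r)] uncurry ψ) : waveOperator φ t r = waveOperator ψ t r := by
  have ht : (fun s => φ s r) =ᶠ[𝓝 t] fun s => ψ s r :=
    h.comp_tendsto ((Continuous.prodMk_left r).tendsto t)
  have hr : φ t =ᶠ[𝓝 r] ψ t := h.comp_tendsto ((Continuous.prodMk_right t).tendsto r)
  rw [waveOperator, waveOperator, ht.iteratedDeriv_eq, hr.iteratedDeriv_eq]

theorem iteratedDeriv_two_comp_add {f : F → E} {X Y : ℝ → F} {x : ℝ}
    (hf : ContDiffAt ℝ 2 f (X x + Y x)) (hX : ContDiffAt ℝ 2 X x) (hY : ContDiffAt ℝ 2 Y x) :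
    iteratedDeriv 2 (fun y => f (X y + Y y)) x =
      fderiv ℝ (fderiv ℝ f) (X x + Y x) (deriv X x + deriv Y x) (deriv X x + deriv Y x) +
        fderiv ℝ f (X x + Y x) (iteratedDeriv 2 X x + iteratedDeriv 2 Y x) := by
  have hXY := iteratedDeriv_vcomp_two (f := fun y => X y + Y y) hf (hX.add hY)
  rwa [iteratedFDeriv_two_apply, iteratedDeriv_fun_add hX hY,
    deriv_fun_add (hX.differentiableAt two_ne_zero) (hY.differentiableAt two_ne_zero)] at hXY

theorem waveOperator_comp_sub_add_add {f : F → E} {X Y : ℝ → F} {t r : ℝ}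
    (hf : ContDiffAt ℝ 2 f (X (t - r) + Y (t + r)))
    (hX : ContDiffAt ℝ 2 X (t - r)) (hY : ContDiffAt ℝ 2 Y (t + r)) :
    waveOperator (fun t r => f (X (t - r) + Y (t + r))) t r =
      (4 : ℝ) • fderiv ℝ (fderiv ℝ f) (X (t - r) + Y (t + r))
        (deriv X (t - r)) (deriv Y (t + r)) := by
  have hsymm := (hf.isSymmSndFDerivAt (by simp)).eq (deriv Y (t + r)) (deriv X (t - r))
  rw [waveOperator,
    iteratedDeriv_two_comp_add (X := fun s => X (s - r)) (Y := fun s => Y (s + r)) hf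
      (hX.comp t (by fun_prop)) (hY.comp t (by fun_prop)),
    iteratedDeriv_two_comp_add (X := fun s => X (t - s)) (Y := fun s => Y (t + s)) hf
      (hX.comp r (by fun_prop)) (hY.comp r (by fun_prop))]
  simp only [deriv_comp_sub_const, deriv_comp_add_const, deriv_comp_const_sub,
    deriv_comp_const_add, iteratedDeriv_comp_sub_const, iteratedDeriv_comp_add_const,
    iteratedDeriv_comp_const_sub, iteratedDeriv_comp_const_add, map_add, map_neg,
    add_apply, neg_apply, hsymm, even_two, Even.neg_pow, one_pow, one_smul]
  module

theorem waveOperator_comp_smul_add_smul {f : F → E} {g h : ℝ → ℝ} {t r : ℝ} (a b : F)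
    (hf : ContDiffAt ℝ 2 f (g (t - r) • a + h (t + r) • b))
    (hg : ContDiffAt ℝ 2 g (t - r)) (hh : ContDiffAt ℝ 2 h (t + r)) :
    waveOperator (fun t r => f (g (t - r) • a + h (t + r) • b)) t r =
      (4 * (deriv g (t - r) * deriv h (t + r))) •
        fderiv ℝ (fderiv ℝ f) (g (t - r) • a + h (t + r) • b) a b := by
  rw [waveOperator_comp_sub_add_add (X := fun u => g u • a) (Y := fun v => h v • b) hf
      (by fun_prop) (by fun_prop),
    deriv_smul_const (hg.differentiableAt two_ne_zero),
    deriv_smul_const (hh.differentiableAt two_ne_zero), map_smul, map_smul, smul_apply]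
  module

theorem waveOperator_eq_fderiv_fderiv {φ : ℝ → ℝ → E} {t r : ℝ}
    (hφ : ContDiffAt ℝ 2 (uncurry φ) (t, r)) :
    waveOperator φ t r =
      (4 : ℝ) • fderiv ℝ (fderiv ℝ (uncurry φ)) (t, r) (1 / 2, -1 / 2) (1 / 2, 1 / 2) := by
  have null_coordinates (t r : ℝ) :
      (t - r) • ((1 / 2, -1 / 2) : ℝ × ℝ) + (t + r) • ((1 / 2, 1 / 2) : ℝ × ℝ) = (t, r) := by
    ext <;> simp <;> ring
  have comp_eq := waveOperator_comp_smul_add_smul (f := uncurry φ) (g := id) (h := id)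
    (t := t) (r := r) (1 / 2, -1 / 2) (1 / 2, 1 / 2) (by simpa only [id, null_coordinates])
    contDiffAt_id contDiffAt_id
  simpa only [id, null_coordinates, uncurry_apply_pair, deriv_id, mul_one] using comp_eq

theorem waveOperator_comp_conformal {φ : ℝ → ℝ → E} {g h : ℝ → ℝ} {t r : ℝ}
    (hφ : ContDiffAt ℝ 2 (uncurry φ)
      ((g (t - r) + h (t + r)) / 2, (g (t - r) - h (t + r)) / 2))
    (hg : ContDiffAt ℝ 2 g (t - r)) (hh : ContDiffAt ℝ 2 h (t + r)) :
    waveOperator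
        (fun t r => φ ((g (t - r) + h (t + r)) / 2) ((g (t - r) - h (t + r)) / 2)) t r =
      (deriv g (t - r) * deriv h (t + r)) •
        waveOperator φ ((g (t - r) + h (t + r)) / 2) ((g (t - r) - h (t + r)) / 2) := by
  have null_coordinates (u v : ℝ) :
      u • ((1 / 2, 1 / 2) : ℝ × ℝ) + v • ((1 / 2, -1 / 2) : ℝ × ℝ) =
        ((u + v) / 2, (u - v) / 2) := by
    ext <;> simp <;> ring
  have comp_eq := waveOperator_comp_smul_add_smul (f := uncurry φ) (1 / 2, 1 / 2) (1 / 2, -1 / 2)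
    (by rwa [null_coordinates]) hg hh
  simp only [null_coordinates, uncurry_apply_pair] at comp_eq
  rw [comp_eq, waveOperator_eq_fderiv_fderiv hφ, smul_smul, mul_comm (4 : ℝ),
    (hφ.isSymmSndFDerivAt (by simp)).eq]

theorem iteratedDeriv_two_smul {f : ℝ → ℝ} {g : ℝ → E} {x : ℝ} (hf : ContDiffAt ℝ 2 f x)
    (hg : ContDiffAt ℝ 2 g x) :
    iteratedDeriv 2 (fun y => f y • g y) x =
      f x • iteratedDeriv 2 g x + (2 * deriv f x) • deriv g x + iteratedDeriv 2 f x • g x := by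
  have leibniz := iteratedDerivWithin_smul (mem_univ x) uniqueDiffOn_univ
    hf.contDiffWithinAt hg.contDiffWithinAt
  simp only [iteratedDerivWithin_univ, Finset.sum_range_succ] at leibniz
  refine leibniz.trans ?_
  simp only [Finset.sum_range_zero, zero_add, Nat.choose_zero_right, Nat.choose_one_right,
    Nat.choose_self, iteratedDeriv_zero, iteratedDeriv_one, tsub_zero, tsub_self,
    Nat.add_one_sub_one]
  module

theorem iteratedDeriv_two_rpow_smul (k : ℝ) {g : ℝ → E} {r : ℝ} (hr : r ≠ 0)
    (hg : ContDiffAt ℝ 2 g r) :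
    iteratedDeriv 2 (fun y => y ^ k • g y) r =
      r ^ k • (iteratedDeriv 2 g r + (2 * k / r) • deriv g r + (k * (k - 1) / r ^ 2) • g r) := by
  have hdd : iteratedDeriv 2 (fun y : ℝ => y ^ k) r = k * ((k - 1) * r ^ (k - 1 - 1)) := by
    rw [iteratedDeriv_succ, iteratedDeriv_one, Real.deriv_rpow_const', deriv_const_mul_field,
      Real.deriv_rpow_const]
  rw [iteratedDeriv_two_smul (Real.contDiffAt_rpow_const_of_ne hr) hg, hdd,
    Real.deriv_rpow_const]
  simp only [Real.rpow_sub_one hr]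
  match_scalars <;> field_simp

theorem waveOperator_rpow_smul (n : ℝ) {φ : ℝ → ℝ → E} {t r : ℝ} (hr : r ≠ 0)
    (hφ : ContDiffAt ℝ 2 (φ t) r) :
    waveOperator (fun t r => r ^ ((n - 1) / 2) • φ t r) t r =
      r ^ ((n - 1) / 2) •
        (radialWaveOperator n φ t r - ((n - 1) * (n - 3) / (4 * r ^ 2)) • φ t r) := by
  rw [radialWaveOperator, waveOperator, waveOperator, iteratedDeriv_fun_const_smul_field,
    iteratedDeriv_two_rpow_smul _ hr hφ]
  match_scalars <;> field_simp
  ring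

/-- The Lorentzian square `Q = (T − t)² − r²` of the displacement from the vertex `(T, 0)`. -/
def lorentzSq (T t r : ℝ) : ℝ := (T - t) ^ 2 - r ^ 2

/-- Inversion `x ↦ x / Q` in the Lorentzian square, with origin at the vertex `(T, 0)`. Where
`Q = 0`, division by zero makes its value `(T, 0)`. -/
noncomputable def lightConeInversion (T : ℝ) (p : ℝ × ℝ) : ℝ × ℝ :=
  (T + (p.1 - T) / lorentzSq T p.1 p.2, p.2 / lorentzSq T p.1 p.2)

/-- The transform `φ̃ = Q ^ (−(n − 1) / 2) φ ∘ κ` under the inversion `κ`, for `n` space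
dimensions. -/
noncomputable def conformalTransform (n T : ℝ) (φ : ℝ → ℝ → E) (t r : ℝ) : E :=
  lorentzSq T t r ^ (-((n - 1) / 2)) •
    φ (lightConeInversion T (t, r)).1 (lightConeInversion T (t, r)).2

/-- The domain `Ω`: the open backward light cone of `(T, 0)` with the axis `r = 0` removed. -/
def backwardLightCone (T : ℝ) : Set (ℝ × ℝ) := {p | p.1 < T ∧ 0 < p.2 ∧ p.2 < T - p.1}

theorem isOpen_backwardLightCone (T : ℝ) : IsOpen (backwardLightCone T) := by
  simp only [backwardLightCone, ofPred_and]
  exact (isOpen_lt (by fun_prop) (by fun_prop)).inter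
    ((isOpen_lt (by fun_prop) (by fun_prop)).inter (isOpen_lt (by fun_prop) (by fun_prop)))

theorem lorentzSq_pos {T t r : ℝ} (h : (t, r) ∈ backwardLightCone T) : 0 < lorentzSq T t r := by
  obtain ⟨-, hr, hrt⟩ := h
  exact sub_pos.2 (pow_lt_pow_left₀ hrt hr.le two_ne_zero)

theorem contDiff_lorentzSq {m : WithTop ℕ∞} (T : ℝ) :
    ContDiff ℝ m fun p : ℝ × ℝ => lorentzSq T p.1 p.2 := by
  unfold lorentzSq; fun_prop

theorem sub_lightConeInversion_fst (T t r : ℝ) :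
    T - (lightConeInversion T (t, r)).1 = (T - t) / lorentzSq T t r := by
  simp only [lightConeInversion]; ring

theorem mapsTo_lightConeInversion (T : ℝ) :
    MapsTo (lightConeInversion T) (backwardLightCone T) (backwardLightCone T) := by
  rintro ⟨t, r⟩ h
  have hQ := lorentzSq_pos h
  obtain ⟨ht, hr, hrt⟩ := h
  refine ⟨?_, div_pos hr hQ, ?_⟩
  · rw [← sub_pos, sub_lightConeInversion_fst]
    exact div_pos (sub_pos.2 ht) hQ
  · rw [sub_lightConeInversion_fst]
    exact div_lt_div_of_pos_right hrt hQ

theorem lorentzSq_eq_mul (T t r : ℝ) : lorentzSq T t r = (t - r - T) * (t + r - T) := by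
  unfold lorentzSq; ring

theorem lightConeInversion_eq_null {T t r : ℝ} (hQ : lorentzSq T t r ≠ 0) :
    lightConeInversion T (t, r) =
      (((T + (t - r - T)⁻¹) + (T + (t + r - T)⁻¹)) / 2,
        ((T + (t - r - T)⁻¹) - (T + (t + r - T)⁻¹)) / 2) := by
  rw [lorentzSq_eq_mul] at hQ
  obtain ⟨hu, hv⟩ := mul_ne_zero_iff.1 hQ
  ext <;> simp only [lightConeInversion, lorentzSq_eq_mul] <;> field_simp <;> ring

theorem waveOperator_comp_lightConeInversion {φ : ℝ → ℝ → E} {T t r : ℝ}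
    (hQ : lorentzSq T t r ≠ 0)
    (hφ : ContDiffAt ℝ 2 (uncurry φ) (lightConeInversion T (t, r))) :
    waveOperator
        (fun t r => φ (lightConeInversion T (t, r)).1 (lightConeInversion T (t, r)).2) t r =
      (lorentzSq T t r ^ 2)⁻¹ •
        waveOperator φ (lightConeInversion T (t, r)).1 (lightConeInversion T (t, r)).2 := by
  have null_form :
      (uncurry fun t r => φ (lightConeInversion T (t, r)).1 (lightConeInversion T (t, r)).2)
        =ᶠ[𝓝 (t, r)] uncurry fun t r => φ (((T + (t - r - T)⁻¹) + (T + (t + r - T)⁻¹)) / 2)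
          (((T + (t - r - T)⁻¹) - (T + (t + r - T)⁻¹)) / 2) := by
    filter_upwards [(contDiff_lorentzSq (m := 0) T).continuous.continuousAt.eventually_ne hQ]
      with p hp
    simp only [uncurry_def, lightConeInversion_eq_null hp]
  have deriv_inversion (x : ℝ) : deriv (fun u => T + (u - T)⁻¹) x = -((x - T) ^ 2)⁻¹ := by
    rw [deriv_const_add, deriv_comp_sub_const (fun u => u⁻¹), deriv_inv]
  have contDiffAt_inversion {x : ℝ} (hx : x - T ≠ 0) :
      ContDiffAt ℝ 2 (fun u => T + (u - T)⁻¹) x := by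
    fun_prop (disch := assumption)
  obtain ⟨hu, hv⟩ := mul_ne_zero_iff.1 (lorentzSq_eq_mul T t r ▸ hQ)
  rw [lightConeInversion_eq_null hQ] at hφ ⊢
  rw [waveOperator_congr null_form,
    waveOperator_comp_conformal (g := fun u => T + (u - T)⁻¹) (h := fun u => T + (u - T)⁻¹)
      hφ (contDiffAt_inversion hu) (contDiffAt_inversion hv),
    deriv_inversion, deriv_inversion, neg_mul_neg, ← mul_inv, ← mul_pow, ← lorentzSq_eq_mul]

theorem contDiffAt_of_uncurry {m : WithTop ℕ∞} {φ : ℝ → ℝ → E} {t r : ℝ}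
    (hφ : ContDiffAt ℝ m (uncurry φ) (t, r)) : ContDiffAt ℝ m (φ t) r :=
  hφ.comp r (f := fun y => (t, y)) (by fun_prop)

theorem contDiffAt_lightConeInversion {m : WithTop ℕ∞} {T t r : ℝ} (hQ : lorentzSq T t r ≠ 0) :
    ContDiffAt ℝ m (lightConeInversion T) (t, r) := by
  unfold lightConeInversion lorentzSq at *
  fun_prop (disch := assumption)

theorem contDiffAt_conformalTransform {m : WithTop ℕ∞} (n : ℝ) {φ : ℝ → ℝ → E} {T t r : ℝ}
    (hQ : lorentzSq T t r ≠ 0)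
    (hφ : ContDiffAt ℝ m (uncurry φ) (lightConeInversion T (t, r))) :
    ContDiffAt ℝ m (uncurry (conformalTransform n T φ)) (t, r) :=
  ((contDiff_lorentzSq T).contDiffAt.rpow_const_of_ne hQ).smul
    (hφ.comp (t, r) (contDiffAt_lightConeInversion hQ))

theorem rpow_smul_conformalTransform (n : ℝ) (φ : ℝ → ℝ → E) {T t r : ℝ} (hr : 0 < r)
    (hQ : 0 < lorentzSq T t r) :
    r ^ ((n - 1) / 2) • conformalTransform n T φ t r =
      (lightConeInversion T (t, r)).2 ^ ((n - 1) / 2) •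
        φ (lightConeInversion T (t, r)).1 (lightConeInversion T (t, r)).2 := by
  rw [conformalTransform, smul_smul, Real.rpow_neg hQ.le, ← div_eq_mul_inv,
    ← Real.div_rpow hr.le hQ.le, lightConeInversion]

theorem waveOperator_rpow_smul_conformalTransform (n : ℝ) {φ : ℝ → ℝ → E} {T t r : ℝ}
    (hr : 0 < r) (hQ : 0 < lorentzSq T t r)
    (hφ : ContDiffAt ℝ 2 (uncurry φ) (lightConeInversion T (t, r))) :
    waveOperator (fun t r => r ^ ((n - 1) / 2) • conformalTransform n T φ t r) t r =
      (lorentzSq T t r ^ 2)⁻¹ • waveOperator (fun t r => r ^ ((n - 1) / 2) • φ t r)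
        (lightConeInversion T (t, r)).1 (lightConeInversion T (t, r)).2 := by
  have hr' : 0 < (lightConeInversion T (t, r)).2 := div_pos hr hQ
  rw [← waveOperator_comp_lightConeInversion (φ := fun t r => r ^ ((n - 1) / 2) • φ t r) hQ.ne'
    ((contDiffAt_snd.rpow_const_of_ne hr'.ne').smul hφ)]
  apply waveOperator_congr
  filter_upwards [(contDiff_lorentzSq (m := 0) T).continuous.continuousAt.eventually_mem
    (Ioi_mem_nhds hQ), continuousAt_snd.eventually_mem (Ioi_mem_nhds hr)] with p hpQ hpr
  exact rpow_smul_conformalTransform n φ hpr hpQ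

theorem radialWaveOperator_conformalTransform (n : ℝ) {φ : ℝ → ℝ → E} {T t r : ℝ}
    (hr : 0 < r) (hQ : 0 < lorentzSq T t r)
    (hφ : ContDiffAt ℝ 2 (uncurry φ) (lightConeInversion T (t, r))) :
    radialWaveOperator n (conformalTransform n T φ) t r =
      (lorentzSq T t r ^ 2)⁻¹ • conformalTransform n T (radialWaveOperator n φ) t r := by
  have hr' : 0 < (lightConeInversion T (t, r)).2 := div_pos hr hQ
  have conj_eq := waveOperator_rpow_smul_conformalTransform n hr hQ hφ
  rw [waveOperator_rpow_smul n hr.ne'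
      (contDiffAt_of_uncurry (contDiffAt_conformalTransform n hQ.ne' hφ)),
    waveOperator_rpow_smul n (t := (lightConeInversion T (t, r)).1) hr'.ne'
      (contDiffAt_of_uncurry hφ),
    ← rpow_smul_conformalTransform n (fun t r => radialWaveOperator n φ t r -
      ((n - 1) * (n - 3) / (4 * r ^ 2)) • φ t r) hr hQ, smul_comm] at conj_eq
  have cancelled := smul_right_injective E (Real.rpow_pos_of_pos hr _).ne' conj_eq
  rw [sub_eq_iff_eq_add.1 cancelled]
  simp only [conformalTransform, lightConeInversion]
  match_scalars <;> field_simp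
  ring

theorem conformal_invariance_linearized_general (n T : ℝ) (V : ℝ → ℝ) {φ : ℝ → ℝ → E}
    (hφ : ContDiffOn ℝ 2 (uncurry φ) (backwardLightCone T))
    (hsol : ∀ t r, (t, r) ∈ backwardLightCone T →
      radialWaveOperator n φ t r - (((T - t) ^ 2)⁻¹ * V (r / (T - t))) • φ t r = 0) :
    MapsTo (lightConeInversion T) (backwardLightCone T) (backwardLightCone T) ∧
    ∀ t r, (t, r) ∈ backwardLightCone T →
      radialWaveOperator n (conformalTransform n T φ) t r -
        (((T - t) ^ 2)⁻¹ * V (r / (T - t))) • conformalTransform n T φ t r = 0 := by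
  refine ⟨mapsTo_lightConeInversion T, fun t r h => ?_⟩
  have hQ := lorentzSq_pos h
  have hκ := mapsTo_lightConeInversion T h
  have sol := sub_eq_zero.1
    (hsol (lightConeInversion T (t, r)).1 (lightConeInversion T (t, r)).2 hκ)
  have ratio : (lightConeInversion T (t, r)).2 / (T - (lightConeInversion T (t, r)).1) =
      r / (T - t) := by
    rw [sub_lightConeInversion_fst]
    exact div_div_div_cancel_right₀ hQ.ne' _ _
  rw [ratio, sub_lightConeInversion_fst] at sol
  rw [radialWaveOperator_conformalTransform n h.2.1 hQ
      (hφ.contDiffAt ((isOpen_backwardLightCone T).mem_nhds hκ)),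
    conformalTransform, conformalTransform, sol]
  match_scalars
  field_simp
  ring

/-- Conformal invariance of the linearized equation: for `d ≥ 5` and `T > 0`, if `φ` is a
smooth solution on `Ω = {(t,r) : t < T, 0 < r < T−t}` of
`∂_t²φ − ∂_r²φ − ((d−1)/r)∂_rφ − 3(T−t)⁻²U*(r/(T−t))²φ = 0`, then the conformal
transform `φ̃(t,r) = ((T−t)²−r²)^{−(d−1)/2} φ(T+(t−T)/((T−t)²−r²), r/((T−t)²−r²))` is
well defined (the transformation maps `Ω` into `Ω`) and also solves the same equation
on `Ω`. -/
theorem conformal_invariance_linearized (d : ℕ) (hd : 5 ≤ d) (T : ℝ) (hT : 0 < T)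
    (U : ℝ → ℝ)
    (hU : ∀ ρ, U ρ = 2 * Real.sqrt (2 * ((d : ℝ) - 1) * ((d : ℝ) - 4)) /
      ((d : ℝ) - 4 + 3 * ρ ^ 2))
    (Ω : Set (ℝ × ℝ))
    (hΩ : Ω = {p : ℝ × ℝ | p.1 < T ∧ 0 < p.2 ∧ p.2 < T - p.1})
    (φ : ℝ → ℝ → ℝ)
    (hφsmooth : ContDiffOn ℝ (⊤ : ℕ∞) (fun p : ℝ × ℝ => φ p.1 p.2) Ω)
    (hφsol : ∀ t r, (t, r) ∈ Ω →
      iteratedDeriv 2 (fun s => φ s r) t - iteratedDeriv 2 (φ t) r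
        - (((d : ℝ) - 1) / r) * deriv (φ t) r
        - 3 * ((T - t) ^ 2)⁻¹ * (U (r / (T - t))) ^ 2 * φ t r = 0)
    (φt : ℝ → ℝ → ℝ)
    (hφt : ∀ t r, φt t r =
      ((T - t) ^ 2 - r ^ 2) ^ (-(((d : ℝ) - 1) / 2)) *
        φ (T + (t - T) / ((T - t) ^ 2 - r ^ 2)) (r / ((T - t) ^ 2 - r ^ 2))) :
    (∀ t r, (t, r) ∈ Ω →
      (T + (t - T) / ((T - t) ^ 2 - r ^ 2), r / ((T - t) ^ 2 - r ^ 2)) ∈ Ω) ∧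
    (∀ t r, (t, r) ∈ Ω →
      iteratedDeriv 2 (fun s => φt s r) t - iteratedDeriv 2 (φt t) r
        - (((d : ℝ) - 1) / r) * deriv (φt t) r
        - 3 * ((T - t) ^ 2)⁻¹ * (U (r / (T - t))) ^ 2 * φt t r = 0) := by
  obtain rfl : φt = conformalTransform d T φ := funext₂ hφt
  subst hΩ
  have potential_eq (t r : ℝ) : 3 * ((T - t) ^ 2)⁻¹ * U (r / (T - t)) ^ 2 =
      ((T - t) ^ 2)⁻¹ * (3 * U (r / (T - t)) ^ 2) := by ring
  simp only [potential_eq] at hφsol ⊢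
  obtain ⟨maps, sol⟩ := conformal_invariance_linearized_general d T (fun ρ => 3 * U ρ ^ 2)
    (hφsmooth.of_le (WithTop.coe_le_coe.2 le_top)) hφsol
  exact ⟨fun t r h => maps h, sol⟩
end
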